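/- arXiv:2507.11695 — 2 statements merged into one kernel-verified Lean document; each statement's English description precedes it below -/
import Mathlib

section
/- Let W be a real vector space, A : W × W → ℝ a symmetric bilinear form, m : W × W → ℝ a symmetric bilinear form, and λ, λ_h real numbers. Let U, U_h ∈ W and let W_h ⊆ W be a linear subspace with U_h ∈ W_h. Assume the consistency relation A(U, X) = λ m(U, X) for all X ∈ W, and the discrete eigen-equation A(U_h, X_h) = λ_h m(U_h, X_h) for all X_h ∈ W_h. Then A(U − U_h, U − U_h) − λ m(U − U_h, U − U_h) = (λ_h − λ) m(U_h, U_h). -/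
/-- Algebraic identity behind the double-order eigenvalue error estimate: if `(lam, U)`
satisfies the eigen-equation against all of `W` and `(lamh, Uh)` satisfies the discrete
eigen-equation against the subspace `Wh ∋ Uh`, then
`A(U − Uh, U − Uh) − lam·m(U − Uh, U − Uh) = (lamh − lam)·m(Uh, Uh)`. -/
theorem stmt_4
    {W : Type*} [AddCommGroup W] [Module ℝ W]
    (A : W →ₗ[ℝ] W →ₗ[ℝ] ℝ) (hAsymm : ∀ X Y : W, A X Y = A Y X)
    (m : W →ₗ[ℝ] W →ₗ[ℝ] ℝ) (hmsymm : ∀ X Y : W, m X Y = m Y X)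
    (lam lamh : ℝ) (U Uh : W) (Wh : Submodule ℝ W) (hUh : Uh ∈ Wh)
    (hcons : ∀ X : W, A U X = lam * m U X)
    (hdisc : ∀ Xh ∈ Wh, A Uh Xh = lamh * m Uh Xh) :
    A (U - Uh) (U - Uh) - lam * m (U - Uh) (U - Uh) = (lamh - lam) * m Uh Uh := by
  simp only [map_sub, LinearMap.sub_apply]
  rw [hAsymm Uh U, hmsymm Uh U, hcons U, hcons Uh, hdisc Uh hUh]
  ring
end

section
/- Let W be a real normed space, A : W × W → ℝ a symmetric bilinear form with |A(X,Y)| ≤ C_A ‖X‖ ‖Y‖ for all X, Y ∈ W, and m : W × W → ℝ a symmetric bilinear form with |m(X,X)| ≤ C_m ‖X‖² for all X ∈ W. Let λ, λ_h ∈ ℝ, U ∈ W, W_h ⊆ W a subspace, and U_h ∈ W_h with A(U, X) = λ m(U, X) for all X ∈ W and A(U_h, X_h) = λ_h m(U_h, X_h) for all X_h ∈ W_h. If m(U_h, U_h) ≥ c̃ for some c̃ > 0, then |λ − λ_h| ≤ ((C_A + |λ| C_m)/c̃) ‖U − U_h‖². -/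
/-- Abstract core of the double-order eigenvalue error estimate for the symmetric IPDG
scheme: under consistency, the discrete eigen-equation, and a lower bound
`m(Uh, Uh) ≥ c̃ > 0`, one has `|lam − lamh| ≤ ((C_A + |lam| C_m)/c̃) ‖U − Uh‖²`. -/
theorem stmt_5
    {W : Type*} [NormedAddCommGroup W] [NormedSpace ℝ W]
    (A : W →ₗ[ℝ] W →ₗ[ℝ] ℝ) (hAsymm : ∀ X Y : W, A X Y = A Y X)
    (CA : ℝ) (hCA : ∀ X Y : W, |A X Y| ≤ CA * ‖X‖ * ‖Y‖)
    (m : W →ₗ[ℝ] W →ₗ[ℝ] ℝ) (hmsymm : ∀ X Y : W, m X Y = m Y X)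
    (Cm : ℝ) (hCm : ∀ X : W, |m X X| ≤ Cm * ‖X‖ ^ 2)
    (lam lamh : ℝ) (U : W) (Wh : Submodule ℝ W) (Uh : W) (hUh : Uh ∈ Wh)
    (hcons : ∀ X : W, A U X = lam * m U X)
    (hdisc : ∀ Xh ∈ Wh, A Uh Xh = lamh * m Uh Xh)
    (ctil : ℝ) (hctil : 0 < ctil) (hlow : ctil ≤ m Uh Uh) :
    |lam - lamh| ≤ ((CA + |lam| * Cm) / ctil) * ‖U - Uh‖ ^ 2 := by
  have key : (lamh - lam) * m Uh Uh
      = A (U - Uh) (U - Uh) - lam * m (U - Uh) (U - Uh) := by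
    simp only [map_sub, LinearMap.sub_apply]
    rw [hAsymm Uh U, hmsymm Uh U, hcons U, hcons Uh, hdisc Uh hUh]
    ring
  have h1 : |lam - lamh| * ctil ≤ |lam - lamh| * m Uh Uh :=
    mul_le_mul_of_nonneg_left hlow (abs_nonneg _)
  have h2 : |lam - lamh| * m Uh Uh
      = |A (U - Uh) (U - Uh) - lam * m (U - Uh) (U - Uh)| := by
    rw [← key, abs_mul, abs_of_pos (lt_of_lt_of_le hctil hlow), abs_sub_comm]
  have h3 := abs_sub (A (U - Uh) (U - Uh)) (lam * m (U - Uh) (U - Uh))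
  rw [abs_mul] at h3
  have h4 := hCA (U - Uh) (U - Uh)
  have h5 := mul_le_mul_of_nonneg_left (hCm (U - Uh)) (abs_nonneg lam)
  rw [div_mul_eq_mul_div, le_div_iff₀ hctil]
  linarith
end
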